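/- arXiv:2106.04438 — 5 statements merged into one kernel-verified Lean document; each statement's English description precedes it below -/
import Mathlib

section
/- For all (p,t) ∈ ℝ^m × ℝ the following identity holds: X[η̄(Y)](p,t) − Y[η̄(X)](p,t) − η̄([X,Y])(p,t) = α·( X₁[ω(Y₁)](p) − Y₁[ω(X₁)](p) − ω(p)([X₁,Y₁](p)) ), where X[η̄(Y)](p,t) denotes the directional derivative of the function (q,s) ↦ α·ω(q)(Y₁(q)) + h₂(s) in the direction (X₁(p), h₁(t)), similarly for Y[η̄(X)], X₁[ω(Y₁)](p) is the directional derivative of q ↦ ω(q)(Y₁(q)) along X₁(p), and η̄([X,Y])(p,t) = α·ω(p)([X₁,Y₁](p)) + h₁(t)·h₂′(t) − h₂(t)·h₁′(t). (This is the key computation in the proof of Theorem 3.3: 2dη̄ = 2α·dω on M₁ × β(I).) -/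
/-- Directional derivative of `(q, s) ↦ α * f q + h s`. -/
lemma fderiv_aux_split {m : ℕ} (f : (Fin m → ℝ) → ℝ) (h : ℝ → ℝ) (α : ℝ)
    (p v : Fin m → ℝ) (t c : ℝ)
    (hf : DifferentiableAt ℝ f p) (hh : DifferentiableAt ℝ h t) :
    fderiv ℝ (fun qs : (Fin m → ℝ) × ℝ => α * f qs.1 + h qs.2) (p, t) (v, c)
      = α * fderiv ℝ f p v + c * deriv h t := by
  have h1 : HasFDerivAt (fun qs : (Fin m → ℝ) × ℝ => f qs.1)
      ((fderiv ℝ f p).comp (ContinuousLinearMap.fst ℝ (Fin m → ℝ) ℝ)) (p, t) :=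
    HasFDerivAt.comp (p, t) (f := Prod.fst) (g := f) hf.hasFDerivAt hasFDerivAt_fst
  have h2 : HasFDerivAt (fun qs : (Fin m → ℝ) × ℝ => h qs.2)
      ((fderiv ℝ h t).comp (ContinuousLinearMap.snd ℝ (Fin m → ℝ) ℝ)) (p, t) :=
    HasFDerivAt.comp (p, t) (f := Prod.snd) (g := h) hh.hasFDerivAt hasFDerivAt_snd
  have h3 : fderiv ℝ h t c = c * deriv h t := by
    rw [fderiv_eq_smul_deriv, smul_eq_mul]
  rw [((h1.const_mul α).fun_add h2).fderiv]
  simp [h3]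

/-- The key computation in the proof of Theorem 3.3: for vector fields
`X = (X₁, h₁)`, `Y = (Y₁, h₂)` on `ℝ^m × ℝ`,
`X[η̄(Y)] − Y[η̄(X)] − η̄([X,Y]) = α·(X₁[ω(Y₁)] − Y₁[ω(X₁)] − ω([X₁,Y₁]))`,
i.e. `2dη̄ = 2α·dω`. -/
theorem stmt_9 (m : ℕ)
    (ω : (Fin m → ℝ) → ((Fin m → ℝ) →L[ℝ] ℝ)) (hω : ContDiff ℝ (⊤ : ℕ∞) ω)
    (α : ℝ)
    (X₁ Y₁ : (Fin m → ℝ) → (Fin m → ℝ))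
    (hX₁ : ContDiff ℝ (⊤ : ℕ∞) X₁) (hY₁ : ContDiff ℝ (⊤ : ℕ∞) Y₁)
    (h₁ h₂ : ℝ → ℝ) (hh₁ : ContDiff ℝ (⊤ : ℕ∞) h₁) (hh₂ : ContDiff ℝ (⊤ : ℕ∞) h₂) :
    ∀ (p : Fin m → ℝ) (t : ℝ),
      fderiv ℝ (fun qs : (Fin m → ℝ) × ℝ => α * ω qs.1 (Y₁ qs.1) + h₂ qs.2)
          (p, t) (X₁ p, h₁ t)
      - fderiv ℝ (fun qs : (Fin m → ℝ) × ℝ => α * ω qs.1 (X₁ qs.1) + h₁ qs.2)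
          (p, t) (Y₁ p, h₂ t)
      - (α * ω p (fderiv ℝ Y₁ p (X₁ p) - fderiv ℝ X₁ p (Y₁ p))
          + (h₁ t * deriv h₂ t - h₂ t * deriv h₁ t))
      = α * (fderiv ℝ (fun q => ω q (Y₁ q)) p (X₁ p)
          - fderiv ℝ (fun q => ω q (X₁ q)) p (Y₁ p)
          - ω p (fderiv ℝ Y₁ p (X₁ p) - fderiv ℝ X₁ p (Y₁ p))) := by
  intro p t
  have dω : Differentiable ℝ ω := hω.differentiable (by simp)
  have dX : Differentiable ℝ X₁ := hX₁.differentiable (by simp)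
  have dY : Differentiable ℝ Y₁ := hY₁.differentiable (by simp)
  have d1 : Differentiable ℝ h₁ := hh₁.differentiable (by simp)
  have d2 : Differentiable ℝ h₂ := hh₂.differentiable (by simp)
  rw [fderiv_aux_split (fun q => ω q (Y₁ q)) h₂ α p (X₁ p) t (h₁ t)
      ((dω p).clm_apply (dY p)) (d2 t),
    fderiv_aux_split (fun q => ω q (X₁ q)) h₁ α p (Y₁ p) t (h₂ t)
      ((dω p).clm_apply (dX p)) (d1 t)]
  ring
end

section
/- Assume dω = Φ₁ in the sense that D(q ↦ ω(q)(v))(p)(u) − D(q ↦ ω(q)(u))(p)(v) = 2·g₁(u, J v) for all p, u, v ∈ ℝ^{2n}. Then for all smooth vector fields X = (X₁, h₁), Y = (Y₁, h₂) on ℝ^{2n} × ℝ as in the product setup and all (p,t): X[η̄(Y)](p,t) − Y[η̄(X)](p,t) − η̄([X,Y])(p,t) = 2α·g( X(p,t), φ̄(Y(p,t)) ). In particular, when α = 1 the 1-form η̄ satisfies the contact metric condition dη̄ = Φ̄. (Theorem 3.3: (M₁ × β(I), φ̄, ξ̄, η̄, g) is a contact metric manifold when α = 1.) -/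
/-- Theorem 3.3: if `dω = Φ₁` (i.e. `u[ω(v)] − v[ω(u)] = 2·g₁(u, Jv)` for constant
vectors `u, v`), then for the product structure on `ℝ^{2n} × ℝ` (with `ℝ^{2n}`
modeled as `(Fin n → ℝ) × (Fin n → ℝ)`) one has
`X[η̄(Y)] − Y[η̄(X)] − η̄([X,Y]) = 2α·g(X, φ̄ Y)`, i.e. `2dη̄ = 2α·Φ̄`; in
particular for `α = 1` the product is a contact metric manifold. -/
theorem stmt_10 (n : ℕ)
    (g₁ : ((Fin n → ℝ) × (Fin n → ℝ)) → ((Fin n → ℝ) × (Fin n → ℝ)) → ℝ)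
    (hg₁ : ∀ u v, g₁ u v = (1/4) * (∑ i, u.1 i * v.1 i + ∑ i, u.2 i * v.2 i))
    (J : ((Fin n → ℝ) × (Fin n → ℝ)) → ((Fin n → ℝ) × (Fin n → ℝ)))
    (hJ : ∀ v, J v = (v.2, -v.1))
    (ω : ((Fin n → ℝ) × (Fin n → ℝ)) → (((Fin n → ℝ) × (Fin n → ℝ)) →L[ℝ] ℝ))
    (hω : ContDiff ℝ (⊤ : ℕ∞) ω) (α : ℝ)
    (hdω : ∀ p u v,
      fderiv ℝ (fun q => ω q v) p u - fderiv ℝ (fun q => ω q u) p v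
        = 2 * g₁ u (J v))
    (φ' : ((Fin n → ℝ) × (Fin n → ℝ)) →
      (((Fin n → ℝ) × (Fin n → ℝ)) × ℝ) → (((Fin n → ℝ) × (Fin n → ℝ)) × ℝ))
    (hφ' : ∀ p v, φ' p v = (J v.1, -α * ω p (J v.1)))
    (g : ((Fin n → ℝ) × (Fin n → ℝ)) →
      (((Fin n → ℝ) × (Fin n → ℝ)) × ℝ) → (((Fin n → ℝ) × (Fin n → ℝ)) × ℝ) → ℝ)
    (hg : ∀ p u w, g p u w
      = g₁ u.1 w.1 + (α * ω p u.1 + u.2) * (α * ω p w.1 + w.2))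
    (X₁ Y₁ : ((Fin n → ℝ) × (Fin n → ℝ)) → ((Fin n → ℝ) × (Fin n → ℝ)))
    (hX₁ : ContDiff ℝ (⊤ : ℕ∞) X₁) (hY₁ : ContDiff ℝ (⊤ : ℕ∞) Y₁)
    (h₁ h₂ : ℝ → ℝ) (hh₁ : ContDiff ℝ (⊤ : ℕ∞) h₁) (hh₂ : ContDiff ℝ (⊤ : ℕ∞) h₂) :
    ∀ (p : (Fin n → ℝ) × (Fin n → ℝ)) (t : ℝ),
      fderiv ℝ (fun qs : ((Fin n → ℝ) × (Fin n → ℝ)) × ℝ =>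
          α * ω qs.1 (Y₁ qs.1) + h₂ qs.2) (p, t) (X₁ p, h₁ t)
      - fderiv ℝ (fun qs : ((Fin n → ℝ) × (Fin n → ℝ)) × ℝ =>
          α * ω qs.1 (X₁ qs.1) + h₁ qs.2) (p, t) (Y₁ p, h₂ t)
      - (α * ω p (fderiv ℝ Y₁ p (X₁ p) - fderiv ℝ X₁ p (Y₁ p))
          + (h₁ t * deriv h₂ t - h₂ t * deriv h₁ t))
      = 2 * α * g p (X₁ p, h₁ t) (φ' p (Y₁ p, h₂ t)) := by
  intro p t
  have key : ∀ (Z : ((Fin n → ℝ) × (Fin n → ℝ)) → ((Fin n → ℝ) × (Fin n → ℝ)))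
      (k : ℝ → ℝ), ContDiff ℝ (⊤ : ℕ∞) Z → ContDiff ℝ (⊤ : ℕ∞) k →
      ∀ (w : (Fin n → ℝ) × (Fin n → ℝ)) (s : ℝ),
      fderiv ℝ (fun qs : ((Fin n → ℝ) × (Fin n → ℝ)) × ℝ =>
          α * ω qs.1 (Z qs.1) + k qs.2) (p, t) (w, s)
        = α * (fderiv ℝ ω p w (Z p) + ω p (fderiv ℝ Z p w)) + s * deriv k t := by
    intro Z k hZ hk w s
    have d1 : HasFDerivAt ω (fderiv ℝ ω p) p :=
      (hω.differentiable (by simp) p).hasFDerivAt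
    have d2 : HasFDerivAt Z (fderiv ℝ Z p) p :=
      (hZ.differentiable (by simp) p).hasFDerivAt
    have d3 : HasDerivAt k (deriv k t) t :=
      (hk.differentiable (by simp) t).hasDerivAt
    have d4 := (d1.clm_apply d2).const_mul α
    have e1 := HasFDerivAt.comp (p, t) (f := Prod.fst) d4 (hasFDerivAt_fst (𝕜 := ℝ) (p := (p, t)))
    have e2 := HasFDerivAt.comp (p, t) (f := Prod.snd) d3.hasFDerivAt
      (hasFDerivAt_snd (𝕜 := ℝ) (p := (p, t)))
    have e3 := (e1.add e2).fderiv
    have e4 := congrArg (fun L => L (w, s)) e3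
    refine Eq.trans e4 ?_
    simp
    ring
  have hc : ∀ u v, fderiv ℝ (fun q => ω q v) p u = fderiv ℝ ω p u v := by
    intro u v
    have d1 : HasFDerivAt ω (fderiv ℝ ω p) p :=
      (hω.differentiable (by simp) p).hasFDerivAt
    rw [(d1.clm_apply (hasFDerivAt_const v p)).fderiv]
    simp
  have hd := hdω p (X₁ p) (Y₁ p)
  rw [hc, hc] at hd
  rw [key Y₁ h₂ hY₁ hh₂, key X₁ h₁ hX₁ hh₁, hg, hφ', map_sub]
  simp only
  linear_combination α * hd
end

section
/- Define φ̄, η̄, ξ̄ on W = V₁ × V₂ as in the warped product construction. Then (φ̄, ξ̄, η̄) is an almost contact structure on W: φ̄(φ̄(X₁,X₂)) = −(X₁,X₂) + η̄(X₁,X₂)·ξ̄ for all (X₁,X₂) ∈ W, and η̄(ξ̄) = 1. (First part of Theorem 4.1: M₁ × M₂ carries an almost contact structure.) -/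
open scoped RealInnerProductSpace

/-- First part of Theorem 4.1 (pointwise model): the warped product of an almost
Hermitian vector space `(V₁, g₁, J)` with exact 1-form `ω` and an almost contact
metric vector space `(V₂, g₂, φ, ξ, η)` carries an almost contact structure
`(φ̄, ξ̄, η̄)`. -/
theorem stmt_12 {V₁ V₂ : Type*}
    [NormedAddCommGroup V₁] [InnerProductSpace ℝ V₁]
    [NormedAddCommGroup V₂] [InnerProductSpace ℝ V₂]
    (J : V₁ →ₗ[ℝ] V₁)
    (hJiso : ∀ x y : V₁, ⟪J x, J y⟫ = ⟪x, y⟫)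
    (hJ2 : ∀ x : V₁, J (J x) = -x)
    (ω : V₁ →ₗ[ℝ] ℝ) (a : ℝ)
    (φ : V₂ →ₗ[ℝ] V₂) (ξ : V₂) (η : V₂ →ₗ[ℝ] ℝ)
    (hφ2 : ∀ X : V₂, φ (φ X) = -X + η X • ξ)
    (hηξ : η ξ = 1)
    (hcompat : ∀ X Y : V₂, ⟪φ X, φ Y⟫ = ⟪X, Y⟫ - η X * η Y)
    (φ' : V₁ × V₂ → V₁ × V₂)
    (hφ' : ∀ (X₁ : V₁) (X₂ : V₂),
      φ' (X₁, X₂) = (J X₁, φ X₂ - (a * ω (J X₁)) • ξ))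
    (η' : V₁ × V₂ → ℝ)
    (hη' : ∀ (X₁ : V₁) (X₂ : V₂), η' (X₁, X₂) = a * ω X₁ + η X₂)
    (ξ' : V₁ × V₂) (hξ' : ξ' = ((0 : V₁), ξ)) :
    (∀ u : V₁ × V₂, φ' (φ' u) = -u + η' u • ξ') ∧ η' ξ' = 1 := by
  have h0 : φ (φ ξ) = 0 := by rw [hφ2, hηξ]; simp
  have h1 : φ ξ = η (φ ξ) • ξ := by
    have h := hφ2 (φ ξ)
    rw [h0, map_zero] at h
    exact (neg_add_eq_zero.mp h.symm)
  have h2 : η (φ ξ) • φ ξ = 0 := by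
    rw [← map_smul, ← h1, h0]
  have h3 : η (φ ξ) = 0 := by
    have h := congrArg η h2
    simpa using h
  have h4 : φ ξ = 0 := by rw [h1, h3, zero_smul]
  subst hξ'
  refine ⟨?_, by rw [hη', hηξ]; simp⟩
  rintro ⟨x, y⟩
  rw [hφ', hφ', hη', hJ2, map_sub, map_smul, h4, hφ2]
  ext
  · simp
  · simp only [Prod.snd_add, Prod.snd_neg, Prod.smul_snd, map_neg]
    module
end

section
/- Let f > 0. The warped product metric g(X,Y) = g₁(X₁,Y₁) + f²·(g₂(X₂,Y₂) − η(X₂)·η(Y₂)) + η̄(X)·η̄(Y) on W = V₁ × V₂ satisfies the almost contact metric compatibility condition: g(φ̄(X), φ̄(Y)) = g(X,Y) − η̄(X)·η̄(Y) for all X = (X₁,X₂), Y = (Y₁,Y₂) ∈ W. (Second part of Theorem 4.1: (M₁ × M₂, φ̄, ξ̄, η̄, g) with the new warped product metric is an almost contact metric manifold.) -/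
open scoped RealInnerProductSpace

/-- Second part of Theorem 4.1 (pointwise model): the new warped product metric
`g(X,Y) = g₁(X₁,Y₁) + f²·(g₂(X₂,Y₂) − η(X₂)η(Y₂)) + η̄(X)η̄(Y)` satisfies the
almost contact metric compatibility condition `g(φ̄X, φ̄Y) = g(X,Y) − η̄(X)η̄(Y)`. -/
theorem stmt_13 {V₁ V₂ : Type*}
    [NormedAddCommGroup V₁] [InnerProductSpace ℝ V₁]
    [NormedAddCommGroup V₂] [InnerProductSpace ℝ V₂]
    (J : V₁ →ₗ[ℝ] V₁)
    (hJiso : ∀ x y : V₁, ⟪J x, J y⟫ = ⟪x, y⟫)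
    (hJ2 : ∀ x : V₁, J (J x) = -x)
    (ω : V₁ →ₗ[ℝ] ℝ) (a : ℝ)
    (φ : V₂ →ₗ[ℝ] V₂) (ξ : V₂) (η : V₂ →ₗ[ℝ] ℝ)
    (hφ2 : ∀ X : V₂, φ (φ X) = -X + η X • ξ)
    (hηξ : η ξ = 1)
    (hcompat : ∀ X Y : V₂, ⟪φ X, φ Y⟫ = ⟪X, Y⟫ - η X * η Y)
    (f : ℝ) (hf : 0 < f)
    (φ' : V₁ × V₂ → V₁ × V₂)
    (hφ' : ∀ (X₁ : V₁) (X₂ : V₂),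
      φ' (X₁, X₂) = (J X₁, φ X₂ - (a * ω (J X₁)) • ξ))
    (η' : V₁ × V₂ → ℝ)
    (hη' : ∀ (X₁ : V₁) (X₂ : V₂), η' (X₁, X₂) = a * ω X₁ + η X₂)
    (ξ' : V₁ × V₂) (hξ' : ξ' = ((0 : V₁), ξ))
    (g : V₁ × V₂ → V₁ × V₂ → ℝ)
    (hg : ∀ (X₁ : V₁) (X₂ : V₂) (Y₁ : V₁) (Y₂ : V₂),
      g (X₁, X₂) (Y₁, Y₂) = ⟪X₁, Y₁⟫ + f ^ 2 * (⟪X₂, Y₂⟫ - η X₂ * η Y₂)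
        + η' (X₁, X₂) * η' (Y₁, Y₂)) :
    ∀ X Y : V₁ × V₂, g (φ' X) (φ' Y) = g X Y - η' X * η' Y := by
  have h0 : φ (φ ξ) = 0 := by rw [hφ2, hηξ]; simp
  have h1 : φ ξ = η (φ ξ) • ξ := by
    have h := hφ2 (φ ξ)
    rw [h0, map_zero] at h
    have h' : φ ξ = φ ξ + 0 := (add_zero _).symm
    rw [h] at h'
    rw [← add_assoc, add_neg_cancel, zero_add] at h'
    exact h'
  have h2 : η (φ ξ) = 0 := by
    have h := h0
    rw [h1, map_smul, h1, smul_smul] at h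
    have h3 := congrArg η h
    simp only [map_smul, hηξ, map_zero, smul_eq_mul, mul_one] at h3
    exact mul_self_eq_zero.mp h3
  have hφξ : φ ξ = 0 := by rw [h1, h2, zero_smul]
  have hηφ : ∀ X, η (φ X) = 0 := by
    intro X
    have h := hφ2 (φ X)
    rw [hφ2 X, map_add, map_neg, map_smul, hφξ, smul_zero] at h
    have h3 := congrArg η (add_left_cancel h)
    simpa [hηξ] using h3.symm
  have hξl : ∀ Y, ⟪ξ, Y⟫ = η Y := by
    intro Y
    have h := hcompat ξ Y
    rw [hφξ, inner_zero_left, hηξ] at h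
    linarith
  have hξr : ∀ Y, ⟪Y, ξ⟫ = η Y := fun Y => by rw [real_inner_comm, hξl]
  rintro ⟨X₁, X₂⟩ ⟨Y₁, Y₂⟩
  simp only [hφ', hg, hη', hJiso, inner_sub_left, inner_sub_right, real_inner_smul_left,
    real_inner_smul_right, hcompat, hξl, hξr, map_sub, map_smul, hηφ, hηξ, smul_eq_mul]
  ring
end

section
/- Let f > 0. The symmetric bilinear form g(X,Y) = g₁(X₁,Y₁) + f²·(g₂(X₂,Y₂) − η(X₂)·η(Y₂)) + η̄(X)·η̄(Y) on W = V₁ × V₂ is positive definite: g(X,X) ≥ 0 for all X ∈ W, with equality only for X = 0. (The Riemannian-metric property implicitly asserted in Theorem 4.1 for the new warped product metric.) -/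
open scoped RealInnerProductSpace

/-- The new warped product metric
`g(X,Y) = g₁(X₁,Y₁) + f²·(g₂(X₂,Y₂) − η(X₂)η(Y₂)) + η̄(X)η̄(Y)` on `W = V₁ × V₂`
is positive definite (the Riemannian-metric property implicit in Theorem 4.1). -/
theorem stmt_15 {V₁ V₂ : Type*}
    [NormedAddCommGroup V₁] [InnerProductSpace ℝ V₁]
    [NormedAddCommGroup V₂] [InnerProductSpace ℝ V₂]
    (ω : V₁ →ₗ[ℝ] ℝ) (a : ℝ)
    (φ : V₂ →ₗ[ℝ] V₂) (ξ : V₂) (η : V₂ →ₗ[ℝ] ℝ)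
    (hφ2 : ∀ X : V₂, φ (φ X) = -X + η X • ξ)
    (hηξ : η ξ = 1)
    (hcompat : ∀ X Y : V₂, ⟪φ X, φ Y⟫ = ⟪X, Y⟫ - η X * η Y)
    (f : ℝ) (hf : 0 < f)
    (η' : V₁ × V₂ → ℝ)
    (hη' : ∀ (X₁ : V₁) (X₂ : V₂), η' (X₁, X₂) = a * ω X₁ + η X₂)
    (g : V₁ × V₂ → V₁ × V₂ → ℝ)
    (hg : ∀ (X₁ : V₁) (X₂ : V₂) (Y₁ : V₁) (Y₂ : V₂),
      g (X₁, X₂) (Y₁, Y₂) = ⟪X₁, Y₁⟫ + f ^ 2 * (⟪X₂, Y₂⟫ - η X₂ * η Y₂)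
        + η' (X₁, X₂) * η' (Y₁, Y₂)) :
    (∀ X : V₁ × V₂, 0 ≤ g X X) ∧ (∀ X : V₁ × V₂, g X X = 0 → X = 0) := by
  have key : ∀ (X₁ : V₁) (X₂ : V₂), g (X₁, X₂) (X₁, X₂)
      = ‖X₁‖ ^ 2 + (f * ‖φ X₂‖) ^ 2 + (η' (X₁, X₂)) ^ 2 := by
    intro X₁ X₂
    rw [hg, ← hcompat, real_inner_self_eq_norm_sq, real_inner_self_eq_norm_sq]
    ring
  refine ⟨?_, ?_⟩
  · rintro ⟨X₁, X₂⟩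
    rw [key]
    positivity
  · rintro ⟨X₁, X₂⟩ h
    rw [key] at h
    have p1 := sq_nonneg ‖X₁‖
    have p2 := sq_nonneg (f * ‖φ X₂‖)
    have p3 := sq_nonneg (η' (X₁, X₂))
    have e1 : ‖X₁‖ = 0 := pow_eq_zero_iff two_ne_zero |>.mp (by linarith)
    have e2 : f * ‖φ X₂‖ = 0 := pow_eq_zero_iff two_ne_zero |>.mp (by linarith)
    have e3 : η' (X₁, X₂) = 0 := pow_eq_zero_iff two_ne_zero |>.mp (by linarith)
    have z1 : X₁ = 0 := norm_eq_zero.mp e1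
    have z2 : φ X₂ = 0 := norm_eq_zero.mp ((mul_eq_zero.mp e2).resolve_left hf.ne')
    have z3 : η X₂ = 0 := by
      rw [hη', z1] at e3
      simpa using e3
    have z4 : X₂ = 0 := by
      have h4 := hφ2 X₂
      rw [z2, z3] at h4
      simpa using h4
    rw [z1, z4]
    rfl
end
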